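/- arXiv:2511.20929 — 5 statements merged into one kernel-verified Lean document; each statement's English description precedes it below -/
import Mathlib

section
/- Let μ be a DNS satisfaction function and let ε > 0 be such that μ(t) > ε for every cost t > 0. Then for every integer n ≥ 3 and every budget b > 0 there exists a PB instance with n voters and budget b such that the outcome of Greedy_μ has utilitarian ratio at most 1/(n−1) with respect to μ, and moreover every feasible outcome of that instance satisfying EJR1_μ has utilitarian ratio at most 1/(n−1) with respect to μ. -/
open Finset
open scoped Classical

noncomputable section

/-- A participatory budgeting (PB) instance. -/
structure PB (π ν : Type) where
  projs : Finset π
  voters : Finset ν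
  approves : ν → Finset π
  cost : π → ℝ
  budget : ℝ
  projs_nonempty : projs.Nonempty
  budget_pos : 0 < budget
  cost_pos : ∀ p ∈ projs, 0 < cost p
  cost_le_budget : ∀ p ∈ projs, cost p ≤ budget
  approves_subset : ∀ i ∈ voters, approves i ⊆ projs

/-- A satisfaction function assigns a positive value to each positive cost. -/
def IsSat (μ : ℝ → ℝ) : Prop := ∀ t : ℝ, 0 < t → 0 < μ t

/-- A DNS function: weakly increasing, with weakly decreasing satisfaction per unit cost. -/
def IsDNS (μ : ℝ → ℝ) : Prop :=
  IsSat μ ∧ (∀ s t : ℝ, 0 < s → s ≤ t → μ s ≤ μ t) ∧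
    (∀ s t : ℝ, 0 < s → s ≤ t → μ t / t ≤ μ s / s)

namespace PB

variable {π ν : Type}

/-- Supporters of a project. -/
def supp (I : PB π ν) (p : π) : Finset ν := I.voters.filter (fun i => p ∈ I.approves i)

/-- Total cost of a set of projects. -/
def costOf (I : PB π ν) (S : Finset π) : ℝ := ∑ p ∈ S, I.cost p

/-- A feasible outcome. -/
def feasibleSet (I : PB π ν) (S : Finset π) : Prop := S ⊆ I.projs ∧ I.costOf S ≤ I.budget

/-- Minimum project cost. -/
def cmin (I : PB π ν) : ℝ := I.projs.inf' I.projs_nonempty I.cost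

/-- Maximum project cost. -/
def cmax (I : PB π ν) : ℝ := I.projs.sup' I.projs_nonempty I.cost

/-- Utilitarian welfare of a set of projects. -/
def uw (I : PB π ν) (μ : ℝ → ℝ) (S : Finset π) : ℝ :=
  ∑ p ∈ S, ((I.supp p).card : ℝ) * μ (I.cost p)

/-- The value ("bang per buck") of a project. -/
def projVal (I : PB π ν) (μ : ℝ → ℝ) (p : π) : ℝ :=
  ((I.supp p).card : ℝ) * μ (I.cost p) / I.cost p

/-- Satisfaction of voter `i` from an outcome. -/
def satOf (I : PB π ν) (μ : ℝ → ℝ) (i : ν) (S : Finset π) : ℝ :=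
  ∑ p ∈ S ∩ I.approves i, μ (I.cost p)

/-- Minimum satisfaction of a project in the instance. -/
def muMin (I : PB π ν) (μ : ℝ → ℝ) : ℝ :=
  I.projs.inf' I.projs_nonempty (fun p => μ (I.cost p))

/-- Maximum satisfaction of a project in the instance. -/
def muMax (I : PB π ν) (μ : ℝ → ℝ) : ℝ :=
  I.projs.sup' I.projs_nonempty (fun p => μ (I.cost p))

/-- The maximal utilitarian welfare over feasible outcomes. -/
def maxUW (I : PB π ν) (μ : ℝ → ℝ) : ℝ :=
  (I.projs.powerset.filter (fun S => I.costOf S ≤ I.budget)).sup'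
    ⟨∅, Finset.mem_filter.mpr ⟨Finset.empty_mem_powerset _,
      by simpa [PB.costOf] using I.budget_pos.le⟩⟩
    (I.uw μ)

/-- A group `N'` is `T`-cohesive. -/
def cohesive (I : PB π ν) (N' : Finset ν) (T : Finset π) : Prop :=
  N' ⊆ I.voters ∧ T ⊆ I.projs ∧ (∀ i ∈ N', T ⊆ I.approves i) ∧
    I.costOf T ≤ ((N'.card : ℝ) / (I.voters.card : ℝ)) * I.budget

/-- Extended justified representation up to one project w.r.t. `μ`. -/
def EJR1 (I : PB π ν) (μ : ℝ → ℝ) (W : Finset π) : Prop :=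
  ∀ N' T, I.cohesive N' T →
    T ⊆ W ∨ ∃ i ∈ N', ∃ p ∈ I.approves i, p ∉ W ∧
      I.satOf μ i W + μ (I.cost p) > I.satOf μ i T

/-- Pick the element of maximal `f`-value, breaking ties by the linear order. -/
def pickMax [LinearOrder π] (f : π → ℝ) (S : Finset π) (h : S.Nonempty) : π :=
  (S.filter (fun p => ∀ q ∈ S, f q ≤ f p)).min' (by
    obtain ⟨p, hp, hm⟩ := S.exists_max_image f h
    exact ⟨p, Finset.mem_filter.mpr ⟨hp, hm⟩⟩)

/-- Pick the element of minimal `f`-value, breaking ties by the linear order. -/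
def pickMin [LinearOrder π] (f : π → ℝ) (S : Finset π) (h : S.Nonempty) : π :=
  (S.filter (fun p => ∀ q ∈ S, f p ≤ f q)).min' (by
    obtain ⟨p, hp, hm⟩ := S.exists_min_image f h
    exact ⟨p, Finset.mem_filter.mpr ⟨hp, hm⟩⟩)

section Greedy

variable [LinearOrder π]

/-- One choice of the greedy rule: among the unchosen affordable projects, the one of
maximum value (ties broken by the linear order); `none` if no project is affordable. -/
def greedyStep (I : PB π ν) (μ : ℝ → ℝ) (rem : Finset π) (budg : ℝ) : Option π :=
  if h : (rem.filter (fun p => I.cost p ≤ budg)).Nonempty then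
    some (pickMax (I.projVal μ) (rem.filter (fun p => I.cost p ≤ budg)) h)
  else none

/-- The (ordered) list of projects chosen by the greedy rule, with fuel. -/
def greedyAux (I : PB π ν) (μ : ℝ → ℝ) : ℕ → Finset π → ℝ → List π
  | 0, _, _ => []
  | (k+1), rem, budg =>
    match I.greedyStep μ rem budg with
    | none => []
    | some p => p :: greedyAux I μ k (rem.erase p) (budg - I.cost p)

/-- The projects chosen by `Greedy_μ`, in order of selection. -/
def greedySeq (I : PB π ν) (μ : ℝ → ℝ) : List π :=
  greedyAux I μ I.projs.card I.projs I.budget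

/-- The outcome of the greedy rule started from a set `rem` of unchosen projects
with remaining budget `budg`. -/
def greedyFrom (I : PB π ν) (μ : ℝ → ℝ) (rem : Finset π) (budg : ℝ) : Finset π :=
  (greedyAux I μ rem.card rem budg).toFinset

/-- The outcome of `Greedy_μ`. -/
def greedy (I : PB π ν) (μ : ℝ → ℝ) : Finset π := (I.greedySeq μ).toFinset

/-- The state (unchosen projects, remaining budget) of `Greedy_μ` after `k` stages. -/
def greedyStateAux (I : PB π ν) (μ : ℝ → ℝ) : ℕ → Finset π × ℝ
  | 0 => (I.projs, I.budget)
  | (k+1) =>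
    match I.greedyStep μ (greedyStateAux I μ k).1 (greedyStateAux I μ k).2 with
    | none => greedyStateAux I μ k
    | some p => ((greedyStateAux I μ k).1.erase p, (greedyStateAux I μ k).2 - I.cost p)

/-- The project chosen by `Greedy_μ` at stage `k+1` (i.e. after `k` stages), if any. -/
def greedyChoice (I : PB π ν) (μ : ℝ → ℝ) (k : ℕ) : Option π :=
  I.greedyStep μ (I.greedyStateAux μ k).1 (I.greedyStateAux μ k).2

end Greedy

section MES

variable [LinearOrder π]

/-- The set of values `ρ ≥ 0` at which project `p` can be bought given voter budgets `bud`. -/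
def rhoSet (I : PB π ν) (μ : ℝ → ℝ) (bud : ν → ℝ) (p : π) : Set ℝ :=
  {ρ : ℝ | 0 ≤ ρ ∧ ∑ i ∈ I.supp p, min (bud i) (ρ * μ (I.cost p)) = I.cost p}

/-- `ρ(p)`: the least `ρ ≥ 0` at which `p` can be bought (junk value if none exists). -/
def rho (I : PB π ν) (μ : ℝ → ℝ) (bud : ν → ℝ) (p : π) : ℝ := sInf (I.rhoSet μ bud p)

/-- One choice of MES: among the unchosen projects with `ρ(p) < ∞`, one minimizing `ρ(p)`
(ties broken by the linear order); `none` if no project can be bought. -/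
def mesStep (I : PB π ν) (μ : ℝ → ℝ) (rem : Finset π) (bud : ν → ℝ) : Option π :=
  if h : (rem.filter (fun p => (I.rhoSet μ bud p).Nonempty)).Nonempty then
    some (pickMin (I.rho μ bud) (rem.filter (fun p => (I.rhoSet μ bud p).Nonempty)) h)
  else none

/-- Voter budgets after the supporters of `p` pay for it. -/
def mesPay (I : PB π ν) (μ : ℝ → ℝ) (bud : ν → ℝ) (p : π) : ν → ℝ :=
  fun i => if i ∈ I.supp p then bud i - min (bud i) (I.rho μ bud p * μ (I.cost p)) else bud i

/-- The state (unchosen projects, voter budgets) of `MES_μ` after `k` stages. -/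
def mesStateAux (I : PB π ν) (μ : ℝ → ℝ) : ℕ → Finset π × (ν → ℝ)
  | 0 => (I.projs, fun _ => I.budget / (I.voters.card : ℝ))
  | (k+1) =>
    match I.mesStep μ (mesStateAux I μ k).1 (mesStateAux I μ k).2 with
    | none => mesStateAux I μ k
    | some p => ((mesStateAux I μ k).1.erase p, I.mesPay μ (mesStateAux I μ k).2 p)

/-- The project chosen by `MES_μ` at stage `k+1` (i.e. after `k` stages), if any. -/
def mesChoice (I : PB π ν) (μ : ℝ → ℝ) (k : ℕ) : Option π :=
  I.mesStep μ (I.mesStateAux μ k).1 (I.mesStateAux μ k).2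

/-- The final state of `MES_μ`. -/
def mesFinal (I : PB π ν) (μ : ℝ → ℝ) : Finset π × (ν → ℝ) :=
  I.mesStateAux μ I.projs.card

/-- The outcome of `MES_μ`. -/
def mesOutcome (I : PB π ν) (μ : ℝ → ℝ) : Finset π := I.projs \ (I.mesFinal μ).1

/-- The outcome of `MES_μ` completed by `Greedy_μ`: run MES, then greedy on the unchosen
projects with the remaining total budget. -/
def completedMES (I : PB π ν) (μ : ℝ → ℝ) : Finset π :=
  I.mesOutcome μ ∪
    I.greedyFrom μ (I.mesFinal μ).1 (I.budget - I.costOf (I.mesOutcome μ))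

/-- Voter `i` is budget-limited for project `p` after `k` stages of `MES_μ`:
`p` is unchosen and approved by `i`, affordable from the total remaining budget,
but an equal split of its cost exceeds `i`'s personal budget. -/
def budgetLimitedAt (I : PB π ν) (μ : ℝ → ℝ) (k : ℕ) (i : ν) (p : π) : Prop :=
  i ∈ I.voters ∧ p ∈ (I.mesStateAux μ k).1 ∧ p ∈ I.approves i ∧
    I.cost p ≤ ∑ j ∈ I.voters, (I.mesStateAux μ k).2 j ∧
    (I.mesStateAux μ k).2 i < I.cost p / ((I.supp p).card : ℝ)

end MES

/-- Total cost of a list of projects. -/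
def listCost (I : PB π ν) (L : List π) : ℝ := (L.map I.cost).sum

/-- Total utilitarian welfare of a list of projects. -/
def listUW (I : PB π ν) (μ : ℝ → ℝ) (L : List π) : ℝ :=
  (L.map (fun p => ((I.supp p).card : ℝ) * μ (I.cost p))).sum

end PB

/-- The witness instance: a tiny project `0` of cost `δ` approved by voter `0` only, and a
project `1` of cost `b` approved by all other voters. -/
def wit (n : ℕ) (b δ : ℝ) (hb : 0 < b) (hδ : 0 < δ) (hδb : δ ≤ b) : PB ℕ ℕ where
  projs := {0, 1}
  voters := Finset.range n
  approves := fun i => if i = 0 then {0} else {1}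
  cost := fun p => if p = 0 then δ else b
  budget := b
  projs_nonempty := ⟨0, by simp⟩
  budget_pos := hb
  cost_pos := by intro p _; split_ifs <;> assumption
  cost_le_budget := by intro p _; split_ifs <;> simp [hδb]
  approves_subset := by intro i _; split_ifs <;> simp

/-- For a DNS satisfaction function bounded below by `ε > 0`, for every `n ≥ 3`
and budget `b > 0` there is an instance on which both Greedy and every feasible EJR1 outcome
have utilitarian ratio at most `1/(n-1)`. -/
theorem greedy_and_prop_ratio_le_inv_pred (μ : ℝ → ℝ) (hDNS : IsDNS μ)
    (ε : ℝ) (hε : 0 < ε) (hlb : ∀ t : ℝ, 0 < t → ε < μ t) :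
    ∀ n : ℕ, 3 ≤ n → ∀ b : ℝ, 0 < b →
      ∃ I : PB ℕ ℕ, I.voters.card = n ∧ I.budget = b ∧
        I.uw μ (I.greedy μ) ≤ (1 / ((n : ℝ) - 1)) * I.maxUW μ ∧
        ∀ W : Finset ℕ, I.feasibleSet W → I.EJR1 μ W →
          I.uw μ W ≤ (1 / ((n : ℝ) - 1)) * I.maxUW μ := by
  intro n hn b hb
  obtain ⟨hsat, hmono, hdec⟩ := hDNS
  have hn0 : (0 : ℝ) < n := by have : 0 < n := by omega
                               exact_mod_cast this
  have hn3 : (3 : ℝ) ≤ n := by exact_mod_cast hn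
  have hμb : ε < μ b := hlb b hb
  have hμb0 : 0 < μ b := hε.trans hμb
  obtain ⟨δ, hδdef⟩ : ∃ δ : ℝ, δ = b * ε / (n * μ b) := ⟨_, rfl⟩
  have hδ : 0 < δ := by rw [hδdef]; positivity
  have hδn : δ ≤ b / n := by
    rw [hδdef, div_le_div_iff₀ (by positivity) hn0]
    have := mul_le_mul_of_nonneg_left hμb.le (mul_nonneg hb.le hn0.le)
    nlinarith
  have hδb : δ ≤ b := hδn.trans (div_le_self hb.le (by linarith))
  have hval : ((n : ℝ) - 1) * μ b / b < μ δ / δ := by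
    have h1 : ε / δ < μ δ / δ := by
      have := hlb δ hδ
      gcongr
    have h2 : ε / δ = n * μ b / b := by
      rw [hδdef]; field_simp
    rw [h2] at h1
    refine lt_of_le_of_lt ?_ h1
    gcongr
    linarith
  set I := wit n b δ hb hδ hδb with hI
  have hs0 : (I.supp 0).card = 1 := by
    have : I.supp 0 = {0} := by
      ext i
      by_cases h : i = 0 <;> simp [PB.supp, hI, wit, h]
      omega
    rw [this]; simp
  have hs1 : (I.supp 1).card = n - 1 := by
    have : I.supp 1 = (Finset.range n).erase 0 := by
      ext i
      by_cases h : i = 0 <;> simp [PB.supp, hI, wit, h]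
    rw [this, Finset.card_erase_of_mem (by simp; omega)]; simp
  have hs1' : ((I.supp 1).card : ℝ) = n - 1 := by
    rw [hs1, Nat.cast_sub (by omega)]; simp
  have hc0 : I.cost 0 = δ := by simp [hI, wit]
  have hc1 : I.cost 1 = b := by simp [hI, wit]
  have hP : I.projs = {0, 1} := rfl
  have hB : I.budget = b := rfl
  have hmax : ((n : ℝ) - 1) * μ b ≤ I.maxUW μ := by
    have : I.uw μ {1} = ((n : ℝ) - 1) * μ b := by
      simp [PB.uw, hs1', hc1]
    rw [← this]
    unfold PB.maxUW
    apply Finset.le_sup' (I.uw μ)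
    simp [hP, PB.costOf, hc1, hB]
  have hsmall : I.uw μ {0} ≤ (1 / ((n : ℝ) - 1)) * I.maxUW μ := by
    have h1 : I.uw μ {0} = μ δ := by simp [PB.uw, hs0, hc0]
    have hpos : (0 : ℝ) < n - 1 := by linarith
    rw [h1, one_div_mul_eq_div, le_div_iff₀ hpos]
    have := hmono δ b hδ hδb
    nlinarith
  refine ⟨I, by simp [hI, wit], rfl, ?_, ?_⟩
  · have hg : I.greedy μ = {0} := by
      have st1 : I.greedyStep μ I.projs I.budget = some 0 := by
        have hf : I.projs.filter (fun p => I.cost p ≤ I.budget) = {0, 1} := by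
          rw [hP, Finset.filter_eq_self]
          intro p hp
          exact I.cost_le_budget p hp
        have hne : (I.projs.filter (fun p => I.cost p ≤ I.budget)).Nonempty := by
          rw [hf]; simp
        unfold PB.greedyStep
        rw [dif_pos hne]
        congr 1
        unfold PB.pickMax
        generalize_proofs pf
        have hm := Finset.min'_mem _ pf
        generalize Finset.min' _ pf = m at hm
        rw [Finset.mem_filter, hf] at hm
        obtain ⟨hm1, hm2⟩ := hm
        have h0 := hm2 0 (by simp)
        simp only [Finset.mem_insert, Finset.mem_singleton] at hm1
        rcases hm1 with h | h
        · exact h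
        · exfalso
          rw [h] at h0
          simp only [PB.projVal, hs0, hs1', hc0, hc1, Nat.cast_one, one_mul] at h0
          linarith
      have st2 : I.greedyStep μ (I.projs.erase 0) (I.budget - I.cost 0) = none := by
        unfold PB.greedyStep
        rw [dif_neg]
        rintro ⟨p, hp⟩
        simp only [Finset.mem_filter, Finset.mem_erase, hP, Finset.mem_insert,
          Finset.mem_singleton] at hp
        obtain ⟨⟨h1, h2⟩, h3⟩ := hp
        have : p = 1 := by tauto
        rw [this, hc1, hc0, hB] at h3
        linarith
      have hcard : I.projs.card = 2 := by rw [hP]; simp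
      simp [PB.greedy, PB.greedySeq, hcard, PB.greedyAux, st1, st2]
    rw [hg]; exact hsmall
  · intro W hW hE
    have hap : I.approves 0 = {0} := by simp [hI, wit]
    have h0 : 0 ∈ W := by
      have hcoh : I.cohesive {0} {0} := by
        refine ⟨?_, ?_, ?_, ?_⟩
        · simp [hI, wit]; omega
        · simp [hP]
        · simp [hap]
        · have : I.voters.card = n := by simp [hI, wit]
          simp only [PB.costOf, Finset.sum_singleton, hc0, this, hB, Finset.card_singleton,
            Nat.cast_one]
          rw [one_div_mul_eq_div]; exact hδn
      rcases hE _ _ hcoh with h | ⟨i, hi, p, hp, hpW, hgt⟩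
      · simpa using h
      · exfalso
        rw [Finset.mem_singleton] at hi
        subst hi
        rw [hap, Finset.mem_singleton] at hp
        subst hp
        simp [PB.satOf, hap, hpW] at hgt
    have hW0 : W = {0} := by
      have h1 : 1 ∉ W := by
        intro h1
        have hsub : ({0, 1} : Finset ℕ) ⊆ W := by
          intro x hx
          simp at hx
          rcases hx with rfl | rfl <;> assumption
        have := Finset.eq_of_subset_of_card_le hsub (by
          have := Finset.card_le_card hW.1
          rwa [hP] at this)
        have h2 := hW.2
        rw [← this] at h2
        simp [PB.costOf, hc0, hc1, hB] at h2
        linarith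
      ext x
      constructor
      · intro hx
        have := hW.1 hx
        simp [hP] at this
        rcases this with rfl | rfl
        · simp
        · exact absurd hx h1
      · intro hx
        simp at hx
        rw [hx]; exact h0
    rw [hW0]; exact hsmall
end
end

section
/- Let μ be a DNS satisfaction function such that for every ε > 0 there exists a cost t > 0 with μ(t) < ε. Then for every δ > 0 there exists a PB instance such that the outcome of Greedy_μ has utilitarian ratio less than δ with respect to μ, and every feasible outcome of that instance satisfying EJR1_μ has utilitarian ratio less than δ with respect to μ. -/
open Finset
open scoped Classical

noncomputable section

theorem mem_inter_gen {α : Type} (d : DecidableEq α) (s t : Finset α) (a : α) :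
    a ∈ @Inter.inter _ (@Finset.instInter α d) s t ↔ a ∈ s ∧ a ∈ t :=
  @Finset.mem_inter α d a s t

/-- Two projects, two voters; voter `i` approves exactly project `i`. -/
def badI (ε : ℝ) (h0 : 0 < ε) (h1 : ε ≤ 1 / 2) : PB ℕ ℕ where
  projs := {0, 1}
  voters := {0, 1}
  approves := fun i => {i}
  cost := fun p => if p = 0 then ε else 1
  budget := 1
  projs_nonempty := ⟨0, by simp⟩
  budget_pos := one_pos
  cost_pos := by intro p _; split_ifs <;> linarith
  cost_le_budget := by intro p _; split_ifs <;> linarith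
  approves_subset := by intro i hi; simpa using hi

theorem badI_supp (ε : ℝ) (h0 : 0 < ε) (h1 : ε ≤ 1 / 2) (p : ℕ) (hp : p = 0 ∨ p = 1) :
    (badI ε h0 h1).supp p = {p} := by
  ext i
  simp only [PB.supp, badI, Finset.mem_filter, Finset.mem_insert, Finset.mem_singleton]
  omega

theorem badI_greedy (μ : ℝ → ℝ) (ε : ℝ) (h0 : 0 < ε) (h1 : ε ≤ 1 / 2)
    (hv : μ 1 / 1 ≤ μ ε / ε) : (badI ε h0 h1).greedy μ = {0} := by
  have hne : ((badI ε h0 h1).projs.filter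
      (fun p => (badI ε h0 h1).cost p ≤ (badI ε h0 h1).budget)).Nonempty :=
    ⟨0, Finset.mem_filter.mpr ⟨by simp [badI], by simp [badI]; linarith⟩⟩
  have step1 : (badI ε h0 h1).greedyStep μ (badI ε h0 h1).projs (badI ε h0 h1).budget
      = some 0 := by
    unfold PB.greedyStep
    rw [dif_pos hne]
    congr 1
    apply Nat.le_zero.mp
    unfold PB.pickMax
    apply Finset.min'_le
    refine Finset.mem_filter.mpr ⟨Finset.mem_filter.mpr ⟨by simp [badI], by simp [badI]; linarith⟩, ?_⟩
    intro q hq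
    have hq' : q = 0 ∨ q = 1 := by
      have := (Finset.mem_filter.mp hq).1
      simpa [badI] using this
    rcases hq' with rfl | rfl
    · exact le_rfl
    · unfold PB.projVal
      rw [badI_supp _ _ _ _ (Or.inl rfl), badI_supp _ _ _ _ (Or.inr rfl)]
      simpa [badI] using hv
  have step2 : (badI ε h0 h1).greedyStep μ ((badI ε h0 h1).projs.erase 0)
      ((badI ε h0 h1).budget - (badI ε h0 h1).cost 0) = none := by
    unfold PB.greedyStep
    rw [dif_neg]
    rintro ⟨p, hp⟩
    obtain ⟨hp1, hp2⟩ := Finset.mem_filter.mp hp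
    have hp0 := Finset.ne_of_mem_erase hp1
    simp [badI, hp0] at hp2
    linarith
  have hc : (badI ε h0 h1).projs.card = 2 := by simp [badI]
  unfold PB.greedy PB.greedySeq
  rw [hc]
  unfold PB.greedyAux
  rw [step1]
  dsimp only
  unfold PB.greedyAux
  have step2' := step2
  simp only [step2']
  simp

/-- For a DNS satisfaction function taking arbitrarily small values, for every
`δ > 0` there is an instance on which Greedy and every feasible EJR1 outcome have utilitarian
ratio less than `δ`. -/
theorem greedy_and_prop_ratio_arbitrarily_bad (μ : ℝ → ℝ) (hDNS : IsDNS μ)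
    (hsmall : ∀ ε : ℝ, 0 < ε → ∃ t : ℝ, 0 < t ∧ μ t < ε) :
    ∀ δ : ℝ, 0 < δ →
      ∃ I : PB ℕ ℕ,
        I.uw μ (I.greedy μ) < δ * I.maxUW μ ∧
        ∀ W : Finset ℕ, I.feasibleSet W → I.EJR1 μ W →
          I.uw μ W < δ * I.maxUW μ := by
  intro δ hδ
  obtain ⟨hpos, hmono, hdec⟩ := hDNS
  have hμ1 := hpos 1 one_pos
  obtain ⟨t, ht, hμt⟩ := hsmall (δ * μ 1) (by positivity)
  have h0 : 0 < min t (1 / 2) := lt_min ht (by norm_num)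
  have h1 : min t (1 / 2) ≤ (1 / 2 : ℝ) := min_le_right _ _
  have hμε : μ (min t (1 / 2)) < δ * μ 1 := (hmono _ _ h0 (min_le_left _ _)).trans_lt hμt
  generalize min t (1 / 2) = ε at h0 h1 hμε
  have huw0 : (badI ε h0 h1).uw μ {0} = μ ε := by
    unfold PB.uw
    rw [Finset.sum_singleton, badI_supp _ _ _ _ (Or.inl rfl)]
    simp [badI]
  have huw1 : (badI ε h0 h1).uw μ {1} = μ 1 := by
    unfold PB.uw
    rw [Finset.sum_singleton, badI_supp _ _ _ _ (Or.inr rfl)]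
    simp [badI]
  have hmax : μ 1 ≤ (badI ε h0 h1).maxUW μ := by
    rw [← huw1]
    unfold PB.maxUW
    apply Finset.le_sup'
    refine Finset.mem_filter.mpr ⟨by simp [badI], by simp [badI, PB.costOf]⟩
  have hkey : μ ε < δ * (badI ε h0 h1).maxUW μ :=
    hμε.trans_le (mul_le_mul_of_nonneg_left hmax hδ.le)
  refine ⟨badI ε h0 h1, ?_, ?_⟩
  · rw [badI_greedy μ ε h0 h1 (hdec _ _ h0 (by linarith)), huw0]
    exact hkey
  · intro W hf hE
    have hWsub : ∀ p ∈ W, p = 0 ∨ p = 1 := by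
      intro p hp
      simpa [badI] using hf.1 hp
    have h0W : (0 : ℕ) ∈ W := by
      by_contra hn
      have hcoh : (badI ε h0 h1).cohesive {0} {0} := by
        refine ⟨by simp [badI], by simp [badI], by simp [badI], ?_⟩
        simp [badI, PB.costOf]
        linarith
      rcases hE _ _ hcoh with h | ⟨i, hi, p, hp, _, hgt⟩
      · exact hn (by simpa using h)
      · have hi0 : i = 0 := by simpa using hi
        subst hi0
        have hp0 : p = 0 := by simpa [badI] using hp
        subst hp0
        have e1 : (badI ε h0 h1).satOf μ 0 W = 0 := by
          unfold PB.satOf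
          apply Finset.sum_eq_zero
          intro q hq
          obtain ⟨hq1, hq2⟩ := (mem_inter_gen _ _ _ _).mp hq
          have hq0 : q = 0 := by simpa [badI] using hq2
          exact absurd (hq0 ▸ hq1) hn
        have e2 : μ ((badI ε h0 h1).cost 0) ≤ (badI ε h0 h1).satOf μ 0 {0} := by
          unfold PB.satOf
          apply Finset.single_le_sum (f := fun p => μ ((badI ε h0 h1).cost p))
          · intro q hq
            have hq0 := ((mem_inter_gen _ _ _ _).mp hq).1
            rw [Finset.mem_singleton] at hq0
            subst hq0
            exact (hpos _ (by simpa [badI] using h0)).le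
          · exact (mem_inter_gen _ _ _ _).mpr ⟨by simp, hp⟩
        linarith
    have h1W : (1 : ℕ) ∉ W := by
      intro h
      have hs : ({0, 1} : Finset ℕ) ⊆ W := by
        intro x hx
        simp only [Finset.mem_insert, Finset.mem_singleton] at hx
        rcases hx with rfl | rfl <;> assumption
      have hle : (badI ε h0 h1).costOf {0, 1} ≤ (badI ε h0 h1).costOf W := by
        unfold PB.costOf
        apply Finset.sum_le_sum_of_subset_of_nonneg hs
        intro p hp _
        exact ((badI ε h0 h1).cost_pos p (hf.1 hp)).le
      have := hle.trans hf.2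
      simp [badI, PB.costOf] at this
      linarith
    have hW : W = {0} := by
      ext x
      simp only [Finset.mem_singleton]
      constructor
      · intro hx
        rcases hWsub x hx with h | h
        · exact h
        · exact absurd (h ▸ hx) h1W
      · rintro rfl
        exact h0W
    rw [hW, huw0]
    exact hkey
end
end

section
/- Let μ be a DNS satisfaction function and let I be a PB instance with budget b, minimum project cost c_min and maximum project cost c_max. Let P_G be the outcome of Greedy_μ on I and let P_M be the outcome of MES_μ completed by Greedy_μ on I, where both rules break ties according to the same fixed linear order on projects. Then uw_μ(P_M) ≥ (2·√(c_min/b) − (c_min + c_max)/b) · uw_μ(P_G). -/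
open Finset
open scoped Classical

noncomputable section

namespace PB

variable {π ν : Type}

lemma pickMax_spec [LinearOrder π] (f : π → ℝ) (S : Finset π) (h : S.Nonempty) :
    pickMax f S h ∈ S ∧ ∀ q ∈ S, f q ≤ f (pickMax f S h) := by
  unfold pickMax
  exact Finset.mem_filter.mp (Finset.min'_mem (S.filter (fun p => ∀ q ∈ S, f q ≤ f p)) _)

lemma pickMin_spec [LinearOrder π] (f : π → ℝ) (S : Finset π) (h : S.Nonempty) :
    pickMin f S h ∈ S ∧ ∀ q ∈ S, f (pickMin f S h) ≤ f q := by
  unfold pickMin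
  exact Finset.mem_filter.mp (Finset.min'_mem (S.filter (fun p => ∀ q ∈ S, f p ≤ f q)) _)

lemma greedyStep_some [LinearOrder π] (I : PB π ν) (μ : ℝ → ℝ) (rem : Finset π) (bd : ℝ) (q : π)
    (h : I.greedyStep μ rem bd = some q) :
    q ∈ rem ∧ I.cost q ≤ bd ∧
      ∀ p ∈ rem, I.cost p ≤ bd → I.projVal μ p ≤ I.projVal μ q := by
  unfold greedyStep at h
  split_ifs at h with hn
  have hs := pickMax_spec (I.projVal μ) _ hn
  rw [Option.some.inj h] at hs
  obtain ⟨h1, h2⟩ := hs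
  rw [Finset.mem_filter] at h1
  exact ⟨h1.1, h1.2, fun p hp hc => h2 p (Finset.mem_filter.mpr ⟨hp, hc⟩)⟩

lemma greedyStep_none [LinearOrder π] (I : PB π ν) (μ : ℝ → ℝ) (rem : Finset π) (bd : ℝ)
    (h : I.greedyStep μ rem bd = none) : ∀ p ∈ rem, bd < I.cost p := by
  unfold greedyStep at h
  split_ifs at h with hn
  intro p hp
  by_contra hc
  exact hn ⟨p, Finset.mem_filter.mpr ⟨hp, not_lt.mp hc⟩⟩

lemma mesStep_some [LinearOrder π] (I : PB π ν) (μ : ℝ → ℝ) (rem : Finset π) (bud : ν → ℝ) (q : π)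
    (h : I.mesStep μ rem bud = some q) :
    q ∈ rem ∧ (I.rhoSet μ bud q).Nonempty ∧
      ∀ p ∈ rem, (I.rhoSet μ bud p).Nonempty → I.rho μ bud q ≤ I.rho μ bud p := by
  unfold mesStep at h
  split_ifs at h with hn
  have hs := pickMin_spec (I.rho μ bud) _ hn
  rw [Option.some.inj h] at hs
  obtain ⟨h1, h2⟩ := hs
  rw [Finset.mem_filter] at h1
  exact ⟨h1.1, h1.2, fun p hp hc => h2 p (Finset.mem_filter.mpr ⟨hp, hc⟩)⟩

lemma mesStep_none [LinearOrder π] (I : PB π ν) (μ : ℝ → ℝ) (rem : Finset π) (bud : ν → ℝ)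
    (h : I.mesStep μ rem bud = none) : ∀ p ∈ rem, ¬ (I.rhoSet μ bud p).Nonempty := by
  unfold mesStep at h
  split_ifs at h with hn
  intro p hp hc
  exact hn ⟨p, Finset.mem_filter.mpr ⟨hp, hc⟩⟩

lemma greedyAux_subset [LinearOrder π] (I : PB π ν) (μ : ℝ → ℝ) (k : ℕ) :
    ∀ (rem : Finset π) (bd : ℝ), (I.greedyAux μ k rem bd).toFinset ⊆ rem := by
  induction k with
  | zero => intro rem bd; simp [greedyAux]
  | succ k ih =>
    intro rem bd
    unfold greedyAux
    cases hs : I.greedyStep μ rem bd with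
    | none => simp
    | some q =>
      simp only [List.toFinset_cons]
      obtain ⟨h1, -, -⟩ := I.greedyStep_some μ rem bd q hs
      intro x hx
      rcases Finset.mem_insert.mp hx with rfl | hx
      · exact h1
      · exact Finset.mem_of_mem_erase (ih _ _ hx)

/-- completion: the good part -/
lemma greedyAux_good [LinearOrder π] (I : PB π ν) (μ : ℝ → ℝ) (p : π) (k : ℕ) :
    ∀ (rem : Finset π) (bd : ℝ), rem.card ≤ k → p ∈ rem →
      p ∉ (I.greedyAux μ k rem bd).toFinset →
      ∃ G ⊆ (I.greedyAux μ k rem bd).toFinset,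
        (∀ q ∈ G, I.projVal μ p ≤ I.projVal μ q) ∧ bd - I.costOf G < I.cost p := by
  induction k with
  | zero =>
    intro rem bd hk hp
    have : rem = ∅ := by simpa using hk
    simp [this] at hp
  | succ k ih =>
    intro rem bd hk hp hnot
    by_cases hb : bd < I.cost p
    · exact ⟨∅, by simp, by simp, by simpa [costOf] using hb⟩
    push Not at hb
    unfold greedyAux at hnot ⊢
    cases hs : I.greedyStep μ rem bd with
    | none => exact absurd (I.greedyStep_none μ rem bd hs p hp) (not_lt.mpr hb)
    | some q =>
      obtain ⟨h1, h2, h3⟩ := I.greedyStep_some μ rem bd q hs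
      simp only [hs, List.toFinset_cons, Finset.mem_insert, not_or] at hnot ⊢
      obtain ⟨hpq, hnot⟩ := hnot
      obtain ⟨G, hG, hv, hc⟩ := ih (rem.erase q) (bd - I.cost q)
        (by rw [Finset.card_erase_of_mem h1]; omega) (Finset.mem_erase.mpr ⟨hpq, hp⟩) hnot
      have hqG : q ∉ G := fun h => by
        have := I.greedyAux_subset μ k _ _ (hG h)
        simp at this
      refine ⟨insert q G, Finset.insert_subset_insert _ hG, ?_, ?_⟩
      · intro x hx
        rcases Finset.mem_insert.mp hx with rfl | hx
        · exact h3 p hp hb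
        · exact hv x hx
      · unfold costOf at hc ⊢
        rw [Finset.sum_insert hqG]; linarith

lemma supp_card_le (I : PB π ν) (p : π) : (I.supp p).card ≤ I.voters.card :=
  Finset.card_le_card (Finset.filter_subset _ _)

lemma projVal_mul (I : PB π ν) (μ : ℝ → ℝ) {p : π} (hp : p ∈ I.projs) :
    I.projVal μ p * I.cost p = ((I.supp p).card : ℝ) * μ (I.cost p) := by
  unfold projVal
  have := (I.cost_pos p hp).ne'
  field_simp

lemma uw_eq (I : PB π ν) (μ : ℝ → ℝ) {S : Finset π} (hS : S ⊆ I.projs) :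
    I.uw μ S = ∑ p ∈ S, I.projVal μ p * I.cost p :=
  Finset.sum_congr rfl fun _ hp => (I.projVal_mul μ (hS hp)).symm

lemma greedyAux_uw_le [LinearOrder π] (I : PB π ν) (μ : ℝ → ℝ) (V : ℝ) (hV : 0 ≤ V) (k : ℕ) :
    ∀ (rem : Finset π) (bd : ℝ), rem ⊆ I.projs → 0 ≤ bd →
      (∀ p ∈ rem, I.cost p ≤ bd → I.projVal μ p ≤ V) →
      I.uw μ (I.greedyAux μ k rem bd).toFinset ≤ V * bd := by
  induction k with
  | zero => intro rem bd _ hb _; simp [greedyAux, uw]; positivity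
  | succ k ih =>
    intro rem bd hr hb hle
    unfold greedyAux
    cases hs : I.greedyStep μ rem bd with
    | none => simp [uw]; positivity
    | some q =>
      obtain ⟨h1, h2, h3⟩ := I.greedyStep_some μ rem bd q hs
      have hq0 := I.cost_pos q (hr h1)
      have := ih (rem.erase q) (bd - I.cost q) ((Finset.erase_subset _ _).trans hr)
        (by linarith) (fun p hp hc => hle p (Finset.mem_of_mem_erase hp) (by linarith))
      have hqG : q ∉ (I.greedyAux μ k (rem.erase q) (bd - I.cost q)).toFinset := fun h => by
        have := I.greedyAux_subset μ k _ _ h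
        simp at this
      simp only [List.toFinset_cons]
      unfold uw at this ⊢
      rw [Finset.sum_insert hqG, ← I.projVal_mul μ (hr h1)]
      have h4 := mul_le_mul_of_nonneg_right (hle q h1 h2) hq0.le
      nlinarith

lemma greedyAux_split [LinearOrder π] (I : PB π ν) (μ : ℝ → ℝ)
    (hV : ∀ p ∈ I.projs, 0 ≤ I.projVal μ p) (X : Finset π) (k : ℕ) :
    ∀ (rem : Finset π) (bd : ℝ), rem ⊆ I.projs → 0 ≤ bd →
      (I.greedyAux μ k rem bd).toFinset ⊆ X ∨
      ∃ p ∈ rem, p ∉ X ∧ I.cost p ≤ bd ∧ ∃ P0 ⊆ X, P0 ⊆ rem ∧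
        (∀ q ∈ P0, I.projVal μ p ≤ I.projVal μ q) ∧
        I.uw μ (I.greedyAux μ k rem bd).toFinset ≤
          I.uw μ P0 + I.projVal μ p * (bd - I.costOf P0) := by
  induction k with
  | zero => intro rem bd _ _; left; simp [greedyAux]
  | succ k ih =>
    intro rem bd hr hb
    cases hs : I.greedyStep μ rem bd with
    | none => left; unfold greedyAux; simp [hs]
    | some q =>
      obtain ⟨h1, h2, h3⟩ := I.greedyStep_some μ rem bd q hs
      have hq0 := I.cost_pos q (hr h1)
      by_cases hqX : q ∈ X
      · have hqG : q ∉ (I.greedyAux μ k (rem.erase q) (bd - I.cost q)).toFinset := fun h => by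
          have := I.greedyAux_subset μ k _ _ h
          simp at this
        unfold greedyAux
        simp only [hs, List.toFinset_cons]
        rcases ih (rem.erase q) (bd - I.cost q) ((Finset.erase_subset _ _).trans hr)
          (by linarith) with h | ⟨p, hp, hpX, hpc, P0, hPX, hPr, hPv, hu⟩
        · left; exact Finset.insert_subset hqX h
        · right
          have hqP : q ∉ P0 := fun h => by simpa using hPr h
          refine ⟨p, Finset.mem_of_mem_erase hp, hpX, by linarith, insert q P0,
            Finset.insert_subset hqX hPX,
            Finset.insert_subset h1 (hPr.trans (Finset.erase_subset _ _)), ?_, ?_⟩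
          · intro x hx
            rcases Finset.mem_insert.mp hx with rfl | hx
            · exact h3 p (Finset.mem_of_mem_erase hp) (by linarith)
            · exact hPv x hx
          · unfold uw costOf at hu ⊢
            rw [Finset.sum_insert hqG, Finset.sum_insert hqP, Finset.sum_insert hqP]
            have : bd - (I.cost q + ∑ p ∈ P0, I.cost p)
              = bd - I.cost q - ∑ p ∈ P0, I.cost p := by ring
            rw [this]
            linarith
      · right
        refine ⟨q, h1, hqX, h2, ∅, by simp, by simp, by simp, ?_⟩
        have := I.greedyAux_uw_le μ (I.projVal μ q) (hV q (hr h1)) (k+1) rem bd hr hb h3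
        simpa [uw, costOf] using this

section MES2
variable [LinearOrder π]

lemma rhoSet_bdd (I : PB π ν) (μ : ℝ → ℝ) (bud : ν → ℝ) (p : π) :
    BddBelow (I.rhoSet μ bud p) := ⟨0, fun _ h => h.1⟩

lemma rho_nonneg (I : PB π ν) (μ : ℝ → ℝ) (bud : ν → ℝ) (p : π) : 0 ≤ I.rho μ bud p :=
  Real.sInf_nonneg fun _ h => h.1

lemma mesState_inv (I : PB π ν) (μ : ℝ → ℝ) (hμ : IsSat μ) (k : ℕ) :
    (I.mesStateAux μ k).1 ⊆ I.projs ∧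
    (∀ i, 0 ≤ (I.mesStateAux μ k).2 i ∧
      (I.mesStateAux μ k).2 i ≤ I.budget / (I.voters.card : ℝ)) ∧
    (∀ q ∈ I.projs, q ∉ (I.mesStateAux μ k).1 →
      I.cost q ≤ (I.supp q).card * (I.budget / (I.voters.card : ℝ))) ∧
    (I.mesStep μ (I.mesStateAux μ k).1 (I.mesStateAux μ k).2 = none ∨
      (I.mesStateAux μ k).1.card + k = I.projs.card) := by
  induction k with
  | zero =>
    refine ⟨by simp [mesStateAux], fun i => ?_, ?_, ?_⟩
    · simp only [mesStateAux, le_refl, and_true]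
      have := I.budget_pos
      positivity
    · intro q hq h; exact absurd hq (by simpa [mesStateAux] using h)
    · right; simp [mesStateAux]
  | succ k ih =>
    obtain ⟨i1, i2, i3, i4⟩ := ih
    cases hs : I.mesStep μ (I.mesStateAux μ k).1 (I.mesStateAux μ k).2 with
    | none =>
      have : I.mesStateAux μ (k+1) = I.mesStateAux μ k := by
        rw [mesStateAux]; simp [hs]
      rw [this]
      exact ⟨i1, i2, i3, Or.inl hs⟩
    | some q =>
      obtain ⟨h1, h2, h3⟩ := I.mesStep_some μ _ _ q hs
      have hst : I.mesStateAux μ (k+1) =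
        ((I.mesStateAux μ k).1.erase q, I.mesPay μ (I.mesStateAux μ k).2 q) := by
        rw [mesStateAux]; simp [hs]
      have hq0 := I.cost_pos q (i1 h1)
      have hmu := hμ _ hq0
      rw [hst]
      refine ⟨(Finset.erase_subset _ _).trans i1, fun i => ?_, ?_, ?_⟩
      · have := i2 i
        have hr := mul_nonneg (I.rho_nonneg μ (I.mesStateAux μ k).2 q) hmu.le
        simp only [mesPay]
        split_ifs
        · have ha := min_le_left ((I.mesStateAux μ k).2 i)
            (I.rho μ (I.mesStateAux μ k).2 q * μ (I.cost q))
          have hb := le_min this.1 hr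
          constructor <;> linarith [this.2]
        · exact this
      · intro x hx hxn
        by_cases hxq : x = q
        · subst hxq
          obtain ⟨r, hr0, hr⟩ := h2
          rw [← hr, ← nsmul_eq_mul]
          exact Finset.sum_le_card_nsmul _ _ _ fun i _ => (min_le_left _ _).trans (i2 i).2
        · exact i3 x hx fun h => hxn (Finset.mem_erase.mpr ⟨hxq, h⟩)
      · right
        rcases i4 with h | h
        · rw [hs] at h; cases h
        · simp only
          rw [Finset.card_erase_of_mem h1]
          have := Finset.card_pos.mpr ⟨q, h1⟩
          omega

lemma mesState_anti (I : PB π ν) (μ : ℝ → ℝ) (k : ℕ) :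
    (I.mesStateAux μ (k+1)).1 ⊆ (I.mesStateAux μ k).1 := by
  rw [mesStateAux]
  split
  · exact subset_rfl
  · exact Finset.erase_subset _ _

/-- if nobody is limited, the project is affordable -/
lemma rho_le_of_unlimited (I : PB π ν) (μ : ℝ → ℝ) (hμ : IsSat μ) (bud : ν → ℝ) (p : π)
    (hp : p ∈ I.projs) (hm : 0 < (I.supp p).card)
    (h : ∀ i ∈ I.supp p, I.cost p / (I.supp p).card ≤ bud i) :
    (I.rhoSet μ bud p).Nonempty ∧ I.rho μ bud p ≤ 1 / I.projVal μ p := by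
  have hc := I.cost_pos p hp
  have hmu := hμ _ hc
  have hm' : (0:ℝ) < (I.supp p).card := by exact_mod_cast hm
  have hmem : 1 / I.projVal μ p ∈ I.rhoSet μ bud p := by
    have he : 1 / I.projVal μ p * μ (I.cost p) = I.cost p / (I.supp p).card := by
      unfold projVal; field_simp
    refine ⟨by unfold projVal; positivity, ?_⟩
    rw [he, Finset.sum_congr rfl fun i hi => min_eq_right (h i hi)]
    rw [Finset.sum_const, nsmul_eq_mul]; field_simp
  exact ⟨⟨_, hmem⟩, csInf_le (I.rhoSet_bdd μ bud p) hmem⟩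

lemma val_ge_of_rho (I : PB π ν) (μ : ℝ → ℝ) (hμ : IsSat μ) (bud : ν → ℝ) (q : π)
    (hq : q ∈ I.projs) (hne : (I.rhoSet μ bud q).Nonempty) (v : ℝ) (hv : 0 < v)
    (h : I.rho μ bud q ≤ 1 / v) : v ≤ I.projVal μ q := by
  have hc := I.cost_pos q hq
  have hmu := hμ _ hc
  have key : ∀ r ∈ I.rhoSet μ bud q, I.cost q ≤ (I.supp q).card * (r * μ (I.cost q)) := by
    rintro r ⟨hr0, hr⟩
    conv_lhs => rw [← hr]
    rw [← nsmul_eq_mul]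
    exact Finset.sum_le_card_nsmul _ _ _ fun i _ => min_le_right _ _
  have hm : 0 < ((I.supp q).card : ℝ) := by
    obtain ⟨r, hr⟩ := hne
    have := key r hr
    by_contra hcon
    have h0 : ((I.supp q).card : ℝ) = 0 := le_antisymm (not_lt.mp hcon) (by positivity)
    rw [h0] at this; linarith
  have h2 : I.cost q / ((I.supp q).card * μ (I.cost q)) ≤ I.rho μ bud q := by
    refine le_csInf hne fun r hr => ?_
    rw [div_le_iff₀ (by positivity)]
    linarith [key r hr]
  have h3 := h2.trans h
  rw [div_le_div_iff₀ (by positivity) hv] at h3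
  unfold projVal
  rw [le_div_iff₀ hc]; linarith

lemma mes_phase (I : PB π ν) (μ : ℝ → ℝ) (hμ : IsSat μ) (p : π)
    (hp : p ∈ I.projs) (hm : 0 < (I.supp p).card) (k : ℕ) (hk : p ∈ (I.mesStateAux μ k).1) :
    ((∀ i, I.projVal μ p * (I.budget / (I.voters.card : ℝ) - (I.mesStateAux μ k).2 i) ≤
        ∑ q ∈ I.projs \ (I.mesStateAux μ k).1, μ (I.cost q)) ∧
      (∀ q ∈ I.projs \ (I.mesStateAux μ k).1, I.projVal μ p ≤ I.projVal μ q) ∧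
      (∀ i ∈ I.supp p, I.cost p / (I.supp p).card ≤ (I.mesStateAux μ k).2 i)) ∨
    ∃ S ⊆ I.projs \ (I.mesStateAux μ k).1, (∀ q ∈ S, I.projVal μ p ≤ I.projVal μ q) ∧
      I.projVal μ p * (I.budget / (I.voters.card : ℝ) - I.cost p / (I.supp p).card) ≤
        ∑ q ∈ S, μ (I.cost q) := by
  have hc := I.cost_pos p hp
  have hmu := hμ _ hc
  have hm' : (0:ℝ) < (I.supp p).card := by exact_mod_cast hm
  have hv : 0 < I.projVal μ p := by unfold projVal; positivity
  -- suffices the first two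
  suffices hsuff : ((∀ i, I.projVal μ p *
        (I.budget / (I.voters.card : ℝ) - (I.mesStateAux μ k).2 i) ≤
        ∑ q ∈ I.projs \ (I.mesStateAux μ k).1, μ (I.cost q)) ∧
      (∀ q ∈ I.projs \ (I.mesStateAux μ k).1, I.projVal μ p ≤ I.projVal μ q)) ∨
    ∃ S ⊆ I.projs \ (I.mesStateAux μ k).1, (∀ q ∈ S, I.projVal μ p ≤ I.projVal μ q) ∧
      I.projVal μ p * (I.budget / (I.voters.card : ℝ) - I.cost p / (I.supp p).card) ≤
        ∑ q ∈ S, μ (I.cost q) by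
    rcases hsuff with ⟨h1, h2⟩ | h
    · by_cases h3 : ∀ i ∈ I.supp p, I.cost p / (I.supp p).card ≤ (I.mesStateAux μ k).2 i
      · exact Or.inl ⟨h1, h2, h3⟩
      · right
        push Not at h3
        obtain ⟨i, hi, hlt⟩ := h3
        refine ⟨_, subset_rfl, h2, le_trans ?_ (h1 i)⟩
        exact mul_le_mul_of_nonneg_left (by linarith) hv.le
    · exact Or.inr h
  induction k with
  | zero => left; simp [mesStateAux]
  | succ k ih =>
    have hpk := I.mesState_anti μ k hk
    obtain ⟨i1, i2, -, -⟩ := I.mesState_inv μ hμ k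
    cases hs : I.mesStep μ (I.mesStateAux μ k).1 (I.mesStateAux μ k).2 with
    | none =>
      have : I.mesStateAux μ (k+1) = I.mesStateAux μ k := by
        rw [mesStateAux]; simp [hs]
      rw [this]
      exact ih hpk
    | some q =>
      obtain ⟨h1, h2, h3⟩ := I.mesStep_some μ _ _ q hs
      have hst : I.mesStateAux μ (k+1) =
        ((I.mesStateAux μ k).1.erase q, I.mesPay μ (I.mesStateAux μ k).2 q) := by
        rw [mesStateAux]; simp [hs]
      have hq0 := I.cost_pos q (i1 h1)
      have hqmu := hμ _ hq0
      have hsd : I.projs \ (I.mesStateAux μ k).1.erase q =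
          insert q (I.projs \ (I.mesStateAux μ k).1) := by
        ext x
        simp only [Finset.mem_sdiff, Finset.mem_erase, Finset.mem_insert]
        constructor
        · rintro ⟨ha, hb⟩
          by_cases hx : x = q
          · exact Or.inl hx
          · exact Or.inr ⟨ha, fun h => hb ⟨hx, h⟩⟩
        · rintro (rfl | ⟨ha, hb⟩)
          · exact ⟨i1 h1, fun h => h.1 rfl⟩
          · exact ⟨ha, fun h => hb h.2⟩
      have hqn : q ∉ I.projs \ (I.mesStateAux μ k).1 := by simp [h1]
      rw [hst]
      simp only [hsd]
      rcases ih hpk with ⟨ha, hb⟩ | ⟨S, hS, hb, hcc⟩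
      · by_cases hul : ∀ i ∈ I.supp p, I.cost p / (I.supp p).card ≤ (I.mesStateAux μ k).2 i
        · left
          obtain ⟨hne, hle⟩ := I.rho_le_of_unlimited μ hμ _ p hp hm hul
          have hrq := (h3 p hpk hne).trans hle
          have hvq := I.val_ge_of_rho μ hμ _ q (i1 h1) h2 _ hv hrq
          constructor
          · intro i
            rw [Finset.sum_insert hqn]
            have hai := ha i
            simp only [mesPay]
            split_ifs
            · have hmn := min_le_right ((I.mesStateAux μ k).2 i)
                (I.rho μ (I.mesStateAux μ k).2 q * μ (I.cost q))
              have h5 : I.rho μ (I.mesStateAux μ k).2 q * μ (I.cost q) ≤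
                1 / I.projVal μ p * μ (I.cost q) := mul_le_mul_of_nonneg_right hrq hqmu.le
              have h6 := mul_le_mul_of_nonneg_left (hmn.trans h5) hv.le
              have h7 : I.projVal μ p * (1 / I.projVal μ p * μ (I.cost q)) = μ (I.cost q) := by
                field_simp
              rw [h7] at h6
              linarith
            · linarith
          · intro x hx
            rcases Finset.mem_insert.mp hx with rfl | hx
            · exact hvq
            · exact hb x hx
        · right
          push Not at hul
          obtain ⟨i, hi, hlt⟩ := hul
          refine ⟨_, Finset.subset_insert _ _, hb, le_trans ?_ (ha i)⟩
          exact mul_le_mul_of_nonneg_left (by linarith) hv.le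
      · exact Or.inr ⟨S, hS.trans (Finset.subset_insert _ _), hb, hcc⟩

end MES2

lemma numeric (v M n b a cp c C cmx f t : ℝ) (hv : 0 < v) (hM : 0 < M) (hn : 0 < n) (hb : 0 < b)
    (ha : 0 < a) (hcp : cp ≤ cmx)
    (hf : f = 2 * Real.sqrt (a / b) - (a + cmx) / b)
    (h1 : v * (b / n) - cp * M ≤ M * c) (h2 : b - cp ≤ C) (ht : t = min v (n * M * a / b)) :
    f * v * b ≤ v * c + t * (C - c) := by
  have hr0 := Real.sqrt_nonneg (a / b)
  have hr2 : Real.sqrt (a / b) ^ 2 = a / b := Real.sq_sqrt (by positivity)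
  set r := Real.sqrt (a / b)
  have hab : a = r ^ 2 * b := by rw [hr2]; field_simp
  have hfb : f * b = 2 * r * b - r ^ 2 * b - cmx := by
    rw [hf, ← hab]; field_simp; ring
  have htv : t ≤ v := ht ▸ min_le_left _ _
  have ht0 : 0 ≤ t := by rw [ht]; exact le_min hv.le (by positivity)
  have hc : v / (M * n) * b - cp ≤ c := by
    have : v / (M * n) * b - cp = (v * (b / n) - cp * M) / M := by field_simp
    rw [this, div_le_iff₀ hM]; linarith
  set s := v / (M * n) with hs
  have hs0 : 0 < s := by positivity
  have e1 : (v - t) * (s * b - cp) + t * (b - cp) ≤ v * c + t * (C - c) := by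
    nlinarith [mul_le_mul_of_nonneg_left hc (sub_nonneg.mpr htv),
      mul_le_mul_of_nonneg_left h2 ht0]
  refine le_trans ?_ e1
  have e0 : f * v * b = v * (2 * r * b - r ^ 2 * b - cmx) := by rw [← hfb]; ring
  rw [e0]
  rcases le_total v (n * M * a / b) with h | h
  · rw [min_eq_left h] at ht
    rw [ht]
    nlinarith [mul_nonneg hv.le (mul_nonneg hb.le (sq_nonneg (1 - r))),
      mul_le_mul_of_nonneg_left hcp hv.le]
  · rw [min_eq_right h] at ht
    have hts : t * s = v * r ^ 2 := by rw [ht, hs, hr2]; field_simp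
    have e3 : (v - t) * (s * b - cp) + t * (b - cp) =
      v * s * b - (t * s) * b + t * b - v * cp := by ring
    rw [e3, hts]
    have e4 : 2 * v * r ≤ v * s + t := by
      have : t = v * r ^ 2 / s := by rw [← hts]; field_simp
      rw [this]
      have : v * s + v * r ^ 2 / s - 2 * v * r = v * (s - r) ^ 2 / s := by field_simp; ring
      have h0 : 0 ≤ v * (s - r) ^ 2 / s := by positivity
      linarith
    nlinarith [mul_le_mul_of_nonneg_right e4 hb.le, mul_le_mul_of_nonneg_left hcp hv.le]

lemma completed_subset [LinearOrder π] (I : PB π ν) (μ : ℝ → ℝ) (hμ : IsSat μ) :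
    I.completedMES μ ⊆ I.projs := by
  unfold completedMES mesOutcome greedyFrom
  refine Finset.union_subset Finset.sdiff_subset ?_
  exact (I.greedyAux_subset μ _ _ _).trans (I.mesState_inv μ hμ _).1

lemma projVal_nonneg (I : PB π ν) (μ : ℝ → ℝ) (hμ : IsSat μ) (p : π) (hp : p ∈ I.projs) :
    0 ≤ I.projVal μ p := by
  have hc := I.cost_pos p hp
  have := hμ _ hc
  unfold projVal; positivity

lemma key_bound [LinearOrder π] (I : PB π ν) (μ : ℝ → ℝ) (hDNS : IsDNS μ) (p : π)
    (hp : p ∈ I.projs) (hpX : p ∉ I.completedMES μ) :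
    (2 * Real.sqrt (I.cmin / I.budget) - (I.cmin + I.cmax) / I.budget) *
      I.projVal μ p * I.budget ≤
      ∑ q ∈ I.completedMES μ, min (I.projVal μ q) (I.projVal μ p) * I.cost q := by
  obtain ⟨hμ, hmono, hdec⟩ := hDNS
  have hXs := I.completed_subset μ hμ
  have hv0 := I.projVal_nonneg μ hμ p hp
  have hterm : ∀ q ∈ I.completedMES μ, 0 ≤ min (I.projVal μ q) (I.projVal μ p) * I.cost q :=
    fun q hq => mul_nonneg (le_min (I.projVal_nonneg μ hμ q (hXs hq)) hv0)
      (I.cost_pos q (hXs hq)).le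
  rcases Nat.eq_zero_or_pos (I.supp p).card with hm | hm
  · have : I.projVal μ p = 0 := by unfold projVal; simp [hm]
    rw [this] at hterm ⊢
    simpa using Finset.sum_nonneg hterm
  have hc := I.cost_pos p hp
  have hmu := hμ _ hc
  have hm' : (0:ℝ) < (I.supp p).card := by exact_mod_cast hm
  have hv : 0 < I.projVal μ p := by unfold projVal; positivity
  have hn : (0:ℝ) < I.voters.card := by
    have : (I.supp p).card ≤ I.voters.card := I.supp_card_le p
    exact_mod_cast lt_of_lt_of_le hm this
  have hb := I.budget_pos
  obtain ⟨i1, i2, i3, i4⟩ := I.mesState_inv μ hμ I.projs.card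
  have hX := hpX
  unfold completedMES at hX
  rw [Finset.mem_union, not_or] at hX
  obtain ⟨hX1, hX2⟩ := hX
  have hpr : p ∈ (I.mesFinal μ).1 := by
    by_contra h
    exact hX1 (Finset.mem_sdiff.mpr ⟨hp, h⟩)
  have hnone : I.mesStep μ (I.mesFinal μ).1 (I.mesFinal μ).2 = none := by
    rcases i4 with h | h
    · exact h
    · have : (I.mesFinal μ).1.card = 0 := by unfold mesFinal; omega
      rw [Finset.card_eq_zero] at this
      rw [this] at hpr; simp at hpr
  obtain ⟨S, hS, hSv, hSc⟩ : ∃ S ⊆ I.mesOutcome μ,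
      (∀ q ∈ S, I.projVal μ p ≤ I.projVal μ q) ∧
      I.projVal μ p * (I.budget / (I.voters.card : ℝ) - I.cost p / (I.supp p).card) ≤
        ∑ q ∈ S, μ (I.cost q) := by
    rcases I.mes_phase μ hμ p hp hm I.projs.card hpr with ⟨-, -, h⟩ | h
    · exact absurd (I.rho_le_of_unlimited μ hμ _ p hp hm h).1 (I.mesStep_none μ _ _ hnone p hpr)
    · exact h
  obtain ⟨G, hG, hGv, hGc⟩ := I.greedyAux_good μ p _ (I.mesFinal μ).1
    (I.budget - I.costOf (I.mesOutcome μ)) le_rfl hpr hX2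
  -- minimal cost
  obtain ⟨pm, hpm, hpme⟩ := Finset.exists_mem_eq_inf' I.projs_nonempty I.cost
  have hcm : I.cmin = I.cost pm := hpme
  have hcm0 : 0 < I.cmin := hcm ▸ I.cost_pos pm hpm
  have hcml : ∀ q ∈ I.projs, I.cmin ≤ I.cost q := fun q hq => Finset.inf'_le _ hq
  have hcmx : I.cost p ≤ I.cmax := Finset.le_sup' I.cost hp
  set M := μ I.cmin / I.cmin with hMdef
  have hM : 0 < M := div_pos (hμ _ hcm0) hcm0
  have hMle : ∀ q ∈ I.projs, μ (I.cost q) ≤ M * I.cost q := by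
    intro q hq
    have := hdec _ _ hcm0 (hcml q hq)
    rwa [div_le_iff₀ (I.cost_pos q hq)] at this
  have hmes : I.mesOutcome μ ⊆ I.projs := Finset.sdiff_subset
  have hlow : ∀ q ∈ I.mesOutcome μ, I.voters.card * M * I.cmin / I.budget ≤ I.projVal μ q := by
    intro q hq
    obtain ⟨hq1, hq2⟩ := Finset.mem_sdiff.mp hq
    have h1 := i3 q hq1 hq2
    have hqc := I.cost_pos q hq1
    have h2 := hmono _ _ hcm0 (hcml q hq1)
    have h3 : (I.voters.card : ℝ) * M * I.cmin = I.voters.card * μ I.cmin := by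
      rw [hMdef]; field_simp
    have hmc := hμ _ hcm0
    unfold projVal
    rw [h3, div_le_div_iff₀ hb hqc]
    have h4 : (I.voters.card : ℝ) * I.cost q ≤ (I.supp q).card * I.budget := by
      calc (I.voters.card : ℝ) * I.cost q ≤
          I.voters.card * ((I.supp q).card * (I.budget / (I.voters.card : ℝ))) :=
            mul_le_mul_of_nonneg_left h1 hn.le
        _ = _ := by field_simp
    calc (I.voters.card : ℝ) * μ I.cmin * I.cost q = (I.voters.card * I.cost q) * μ I.cmin := by ring
      _ ≤ ((I.supp q).card * I.budget) * μ (I.cost q) := by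
        apply mul_le_mul h4 h2 hmc.le (by positivity)
      _ = _ := by ring
  have hdisj : Disjoint (I.mesOutcome μ) G := by
    rw [Finset.disjoint_left]
    intro x hx hxG
    exact (Finset.mem_sdiff.mp hx).2 (I.greedyAux_subset μ _ _ _ (hG hxG))
  have hWX : I.mesOutcome μ ∪ G ⊆ I.completedMES μ :=
    Finset.union_subset_union_right hG
  set t := min (I.projVal μ p) (I.voters.card * M * I.cmin / I.budget) with ht
  have hnum := numeric (I.projVal μ p) M I.voters.card I.budget I.cmin (I.cost p) (I.costOf S)
    (I.costOf (I.mesOutcome μ ∪ G)) I.cmax _ t hv hM hn hb hcm0 hcmx rfl ?_ ?_ ht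
  · refine hnum.trans ?_
    have hSW : S ⊆ I.mesOutcome μ ∪ G := hS.trans Finset.subset_union_left
    refine le_trans ?_ (Finset.sum_le_sum_of_subset_of_nonneg hWX fun q hq _ => hterm q hq)
    unfold costOf
    rw [← Finset.sum_sdiff hSW, ← Finset.sum_sdiff hSW, add_sub_cancel_right, Finset.mul_sum,
      Finset.mul_sum, add_comm]
    refine add_le_add (Finset.sum_le_sum fun q hq => ?_) (Finset.sum_le_sum fun q hq => ?_)
    · have hqW := (Finset.mem_sdiff.mp hq).1
      refine mul_le_mul_of_nonneg_right ?_ (I.cost_pos q (hXs (hWX hqW))).le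
      refine le_min ?_ (min_le_left _ _)
      rcases Finset.mem_union.mp hqW with h | h
      · exact (min_le_right _ _).trans (hlow q h)
      · exact (min_le_left _ _).trans (hGv q h)
    · refine mul_le_mul_of_nonneg_right ?_ (I.cost_pos q (hmes (hS hq))).le
      exact le_min (hSv q hq) le_rfl
  · have e1 : ∑ q ∈ S, μ (I.cost q) ≤ M * I.costOf S := by
      unfold costOf; rw [Finset.mul_sum]
      exact Finset.sum_le_sum fun q hq => hMle q (hmes (hS hq))
    have e2 : I.projVal μ p * (I.cost p / (I.supp p).card) = μ (I.cost p) := by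
      unfold projVal; field_simp
    have e3 := hMle p hp
    rw [mul_sub, e2] at hSc
    linarith
  · unfold costOf at hGc ⊢
    rw [Finset.sum_union hdisj]
    linarith

end PB

/-- Comparative guarantee of completed MES over Greedy for DNS functions. -/
theorem mes_over_greedy {π ν : Type} [LinearOrder π] (I : PB π ν)
    (μ : ℝ → ℝ) (hDNS : IsDNS μ) :
    I.uw μ (I.completedMES μ) ≥
      (2 * Real.sqrt (I.cmin / I.budget) - (I.cmin + I.cmax) / I.budget) *
        I.uw μ (I.greedy μ) := by
  have hμ := hDNS.1
  have hXs := I.completed_subset μ hμ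
  have hb := I.budget_pos
  have huw0 : ∀ S ⊆ I.projs, 0 ≤ I.uw μ S := fun S hS =>
    Finset.sum_nonneg fun q hq => mul_nonneg (by positivity) (hμ _ (I.cost_pos q (hS hq))).le
  have hGs : I.greedy μ ⊆ I.projs := I.greedyAux_subset μ _ _ _
  have hcm0 : 0 < I.cmin := by
    obtain ⟨pm, hpm, hpme⟩ := Finset.exists_mem_eq_inf' I.projs_nonempty I.cost
    have hcm : I.cmin = I.cost pm := hpme
    exact hcm ▸ I.cost_pos pm hpm
  have hcmx : 0 < I.cmax := by
    obtain ⟨q, hq⟩ := I.projs_nonempty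
    exact (I.cost_pos q hq).trans_le (Finset.le_sup' I.cost hq)
  have hf1 : 2 * Real.sqrt (I.cmin / I.budget) - (I.cmin + I.cmax) / I.budget ≤ 1 := by
    have hr2 : Real.sqrt (I.cmin / I.budget) ^ 2 = I.cmin / I.budget :=
      Real.sq_sqrt (by positivity)
    rw [add_div]
    have : 0 < I.cmax / I.budget := by positivity
    nlinarith [sq_nonneg (Real.sqrt (I.cmin / I.budget) - 1)]
  have hkey := I.key_bound μ hDNS
  set f := 2 * Real.sqrt (I.cmin / I.budget) - (I.cmin + I.cmax) / I.budget
  rcases lt_or_ge f 0 with hf0 | hf0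
  · have := mul_nonpos_of_nonpos_of_nonneg hf0.le (huw0 _ hGs)
    linarith [huw0 _ hXs]
  have hG0 := huw0 _ hGs
  rcases I.greedyAux_split μ (I.projVal_nonneg μ hμ) (I.completedMES μ) I.projs.card I.projs
    I.budget subset_rfl hb.le with h | ⟨p, hp, hpX, -, P0, hPX, hPr, hPv, hu⟩
  · have h1 : I.uw μ (I.greedy μ) ≤ I.uw μ (I.completedMES μ) :=
      Finset.sum_le_sum_of_subset_of_nonneg h fun q hq _ =>
        mul_nonneg (by positivity) (hμ _ (I.cost_pos q (hXs hq))).le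
    nlinarith
  · have hk := hkey p hp hpX
    have hu' : I.uw μ (I.greedy μ) ≤ I.uw μ P0 + I.projVal μ p * (I.budget - I.costOf P0) := hu
    have e1 : I.projVal μ p * I.costOf P0 ≤ I.uw μ P0 := by
      rw [I.uw_eq μ hPr]; unfold PB.costOf; rw [Finset.mul_sum]
      exact Finset.sum_le_sum fun q hq =>
        mul_le_mul_of_nonneg_right (hPv q hq) (I.cost_pos q (hPr hq)).le
    have e2 : ∑ q ∈ I.completedMES μ, min (I.projVal μ q) (I.projVal μ p) * I.cost q ≤
        I.uw μ (I.completedMES μ) - I.uw μ P0 + I.projVal μ p * I.costOf P0 := by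
      rw [I.uw_eq μ hPr, I.uw_eq μ hXs]; unfold PB.costOf
      rw [← Finset.sum_sdiff hPX, ← Finset.sum_sdiff hPX, add_sub_cancel_right, Finset.mul_sum]
      refine add_le_add (Finset.sum_le_sum fun q hq => ?_) (Finset.sum_le_sum fun q hq => ?_)
      · exact mul_le_mul_of_nonneg_right (min_le_left _ _)
          (I.cost_pos q (hXs (Finset.mem_sdiff.mp hq).1)).le
      · exact mul_le_mul_of_nonneg_right (min_le_right _ _) (I.cost_pos q (hPr hq)).le
    have e3 := mul_le_mul_of_nonneg_left hu' hf0
    have e4 := mul_nonneg (sub_nonneg.mpr hf1) (sub_nonneg.mpr e1)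
    nlinarith
end
end

section
/- Let μ be any satisfaction function (not necessarily DNS) and let I be a PB instance with budget b and maximum project cost c_max. Then the outcome P_G of Greedy_μ satisfies uw_μ(P_G) ≥ ((b − c_max)/b) · uw_μ(P*) for every feasible outcome P* ⊆ P; i.e., Greedy_μ has utilitarian guarantee (b − c_max)/b with respect to μ. -/
open Finset
open scoped Classical

noncomputable section

theorem gg_pick {π : Type} [LinearOrder π] (f : π → ℝ) (S : Finset π) (h : S.Nonempty) :
    PB.pickMax f S h ∈ S ∧ ∀ q ∈ S, f q ≤ f (PB.pickMax f S h) := by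
  have h2 : PB.pickMax f S h ∈ S.filter (fun p => ∀ q ∈ S, f q ≤ f p) := by
    unfold PB.pickMax
    exact Finset.min'_mem _ _
  exact Finset.mem_filter.mp h2

theorem gg_step {π ν : Type} [LinearOrder π] (I : PB π ν) (μ : ℝ → ℝ) (rem : Finset π) (budg : ℝ)
    (p : π) (h : I.greedyStep μ rem budg = some p) :
    p ∈ rem ∧ ∀ q ∈ rem, I.cost q ≤ budg → I.projVal μ q ≤ I.projVal μ p := by
  unfold PB.greedyStep at h
  split_ifs at h with hne
  have hp := gg_pick (I.projVal μ) _ hne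
  rw [Option.some.inj h] at hp
  exact ⟨(Finset.mem_filter.mp hp.1).1, fun q hq hc => hp.2 q (Finset.mem_filter.mpr ⟨hq, hc⟩)⟩

theorem gg_none {π ν : Type} [LinearOrder π] (I : PB π ν) (μ : ℝ → ℝ) (rem : Finset π) (budg : ℝ)
    (h : I.greedyStep μ rem budg = none) : ∀ q ∈ rem, ¬ I.cost q ≤ budg := by
  unfold PB.greedyStep at h
  split_ifs at h with hne
  intro q hq hc
  exact hne ⟨q, Finset.mem_filter.mpr ⟨hq, hc⟩⟩

theorem gg_sub {π ν : Type} [LinearOrder π] (I : PB π ν) (μ : ℝ → ℝ) (k : ℕ) :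
    ∀ (rem : Finset π) (budg : ℝ), ∀ p ∈ I.greedyAux μ k rem budg, p ∈ rem := by
  induction k with
  | zero => intro rem budg p hp; simp [PB.greedyAux] at hp
  | succ k ih =>
    intro rem budg p hp
    unfold PB.greedyAux at hp
    cases hs : I.greedyStep μ rem budg with
    | none => simp [hs] at hp
    | some a =>
      simp only [hs, List.mem_cons] at hp
      rcases hp with rfl | hp
      · exact (gg_step I μ rem budg _ hs).1
      · exact Finset.mem_of_mem_erase (ih _ _ p hp)

theorem gg_main {π ν : Type} [LinearOrder π] (I : PB π ν) (μ : ℝ → ℝ) (M : ℝ) (k : ℕ) :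
    ∀ (rem : Finset π) (budg : ℝ) (T : Finset π), rem.card ≤ k → (∀ p ∈ rem, I.cost p ≤ M) →
      T ⊆ rem →
      (∀ p ∈ T, p ∈ I.greedyAux μ k rem budg) ∨
      ∃ S : Finset π, (∀ p ∈ S, p ∈ I.greedyAux μ k rem budg) ∧ S ⊆ rem ∧
        budg - M ≤ ∑ p ∈ S, I.cost p ∧
        ∃ q ∈ T, q ∉ S ∧ (∀ p ∈ S, I.projVal μ q ≤ I.projVal μ p) ∧
          ∀ p ∈ T, p ∉ S → I.projVal μ p ≤ I.projVal μ q := by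
  induction k with
  | zero =>
    intro rem budg T hc hM hT
    left
    intro p hp
    have : rem = ∅ := Finset.card_eq_zero.mp (by omega)
    subst this
    exact absurd (hT hp) (Finset.notMem_empty p)
  | succ k ih =>
    intro rem budg T hc hM hT
    by_cases hT0 : T.Nonempty
    swap
    · left
      intro p hp
      exact absurd ⟨p, hp⟩ hT0
    by_cases haff : ∀ q ∈ T, I.cost q ≤ budg
    swap
    · right
      push Not at haff
      obtain ⟨q, hq, hqb⟩ := haff
      obtain ⟨m, hm, hmax⟩ := T.exists_max_image (I.projVal μ) hT0
      refine ⟨∅, by simp, by simp, ?_, m, hm, by simp, by simp, fun p hp _ => hmax p hp⟩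
      have := hM q (hT hq)
      simp only [Finset.sum_empty]
      linarith
    cases hs : I.greedyStep μ rem budg with
    | none =>
      obtain ⟨q, hq⟩ := hT0
      exact absurd (haff q hq) (gg_none I μ rem budg hs q (hT hq))
    | some a =>
      obtain ⟨ha, hamax⟩ := gg_step I μ rem budg a hs
      have hl : I.greedyAux μ (k+1) rem budg =
          a :: I.greedyAux μ k (rem.erase a) (budg - I.cost a) := by
        rw [PB.greedyAux, hs]
      rw [hl]
      have hcard : (rem.erase a).card ≤ k := by
        rw [Finset.card_erase_of_mem ha]; omega
      rcases ih (rem.erase a) (budg - I.cost a) (T.erase a) hcard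
        (fun p hp => hM p (Finset.mem_of_mem_erase hp)) (Finset.erase_subset_erase a hT) with h | h
      · left
        intro p hp
        by_cases hpa : p = a
        · simp [hpa]
        · exact List.mem_cons_of_mem _ (h p (Finset.mem_erase.mpr ⟨hpa, hp⟩))
      · right
        obtain ⟨S, hS, hSr, hcost, q, hq, hqS, h1, h2⟩ := h
        obtain ⟨hqa, hqT⟩ := Finset.mem_erase.mp hq
        have haS : a ∉ S := fun h => (Finset.mem_erase.mp (hSr h)).1 rfl
        refine ⟨insert a S, ?_, ?_, ?_, q, hqT, ?_, ?_, ?_⟩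
        · intro p hp
          rcases Finset.mem_insert.mp hp with rfl | hp
          · simp
          · exact List.mem_cons_of_mem _ (hS p hp)
        · intro p hp
          rcases Finset.mem_insert.mp hp with rfl | hp
          · exact ha
          · exact Finset.mem_of_mem_erase (hSr hp)
        · rw [Finset.sum_insert haS]; linarith
        · simp [hqa, hqS]
        · intro p hp
          rcases Finset.mem_insert.mp hp with rfl | hp
          · exact hamax q (hT hqT) (haff q hqT)
          · exact h1 p hp
        · intro p hp hpS
          rw [Finset.mem_insert, not_or] at hpS
          exact h2 p (Finset.mem_erase.mpr ⟨hpS.1, hp⟩) hpS.2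

/-- Greedy has utilitarian guarantee `(b - c_max)/b` for any satisfaction
function. -/
theorem greedy_guarantee {π ν : Type} [LinearOrder π] (I : PB π ν)
    (μ : ℝ → ℝ) (hμ : IsSat μ) :
    ∀ Pstar : Finset π, I.feasibleSet Pstar →
      I.uw μ (I.greedy μ) ≥ ((I.budget - I.cmax) / I.budget) * I.uw μ Pstar := by
  intro T hT
  obtain ⟨hTs, hTc⟩ := hT
  have hb := I.budget_pos
  have hM : ∀ p ∈ I.projs, I.cost p ≤ I.cmax := fun p hp => Finset.le_sup' I.cost hp
  have hM0 : 0 < I.cmax := by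
    obtain ⟨p, hp⟩ := I.projs_nonempty
    exact lt_of_lt_of_le (I.cost_pos p hp) (hM p hp)
  have hw0 : ∀ p ∈ I.projs, 0 ≤ ((I.supp p).card : ℝ) * μ (I.cost p) := fun p hp =>
    mul_nonneg (Nat.cast_nonneg _) (hμ _ (I.cost_pos p hp)).le
  have hwv : ∀ p ∈ I.projs,
      ((I.supp p).card : ℝ) * μ (I.cost p) = I.projVal μ p * I.cost p := by
    intro p hp
    unfold PB.projVal
    rw [div_mul_cancel₀ _ (I.cost_pos p hp).ne']
  have hmono : ∀ S : Finset π, (∀ p ∈ S, p ∈ I.greedySeq μ) →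
      I.uw μ S ≤ I.uw μ (I.greedy μ) := by
    intro S hS
    unfold PB.uw
    apply Finset.sum_le_sum_of_subset_of_nonneg
    · intro p hp
      exact List.mem_toFinset.mpr (hS p hp)
    · intro p hp _
      exact hw0 p (gg_sub I μ _ _ _ p (List.mem_toFinset.mp hp))
  have hT0 : 0 ≤ I.uw μ T := Finset.sum_nonneg fun p hp => hw0 p (hTs hp)
  rcases gg_main I μ I.cmax I.projs.card I.projs I.budget T le_rfl hM hTs with h | h
  · have h1 := hmono T h
    have : (I.budget - I.cmax) / I.budget ≤ 1 := by
      rw [div_le_one hb]; linarith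
    nlinarith
  · obtain ⟨S, hS, hSr, hcost, q, hq, hqS, h1, h2⟩ := h
    have h3 := hmono S hS
    refine le_trans ?_ h3
    unfold PB.uw
    unfold PB.costOf at hTc
    have hv0 : 0 ≤ I.projVal μ q := div_nonneg (hw0 q (hTs hq)) (I.cost_pos q (hTs hq)).le
    set v := I.projVal μ q with hv
    rw [← Finset.sum_inter_add_sum_sdiff S T] at hcost ⊢
    rw [← Finset.sum_inter_add_sum_sdiff T S] at hTc ⊢
    rw [Finset.inter_comm T S] at hTc ⊢
    have a1 : v * ∑ p ∈ S ∩ T, I.cost p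
        ≤ ∑ p ∈ S ∩ T, ((I.supp p).card : ℝ) * μ (I.cost p) := by
      rw [Finset.mul_sum]
      refine Finset.sum_le_sum fun p hp => ?_
      have hpS := (Finset.mem_inter.mp hp).1
      rw [hwv p (hSr hpS)]
      exact mul_le_mul_of_nonneg_right (h1 p hpS) (I.cost_pos p (hSr hpS)).le
    have a2 : v * ∑ p ∈ S \ T, I.cost p
        ≤ ∑ p ∈ S \ T, ((I.supp p).card : ℝ) * μ (I.cost p) := by
      rw [Finset.mul_sum]
      refine Finset.sum_le_sum fun p hp => ?_
      have hpS := (Finset.mem_sdiff.mp hp).1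
      rw [hwv p (hSr hpS)]
      exact mul_le_mul_of_nonneg_right (h1 p hpS) (I.cost_pos p (hSr hpS)).le
    have a3 : ∑ p ∈ T \ S, ((I.supp p).card : ℝ) * μ (I.cost p)
        ≤ v * ∑ p ∈ T \ S, I.cost p := by
      rw [Finset.mul_sum]
      refine Finset.sum_le_sum fun p hp => ?_
      obtain ⟨hpT, hpS⟩ := Finset.mem_sdiff.mp hp
      rw [hwv p (hTs hpT)]
      exact mul_le_mul_of_nonneg_right (h2 p hpT hpS) (I.cost_pos p (hTs hpT)).le
    have hMb : 0 ≤ I.budget - I.cmax :=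
      sub_nonneg.mpr (Finset.sup'_le _ _ fun p hp => I.cost_le_budget p hp)
    generalize (∑ p ∈ S ∩ T, ((I.supp p).card : ℝ) * μ (I.cost p)) = x at *
    generalize (∑ p ∈ S \ T, ((I.supp p).card : ℝ) * μ (I.cost p)) = y at *
    generalize (∑ p ∈ T \ S, ((I.supp p).card : ℝ) * μ (I.cost p)) = z at *
    generalize (∑ p ∈ S ∩ T, I.cost p) = d at *
    generalize (∑ p ∈ S \ T, I.cost p) = e at *
    generalize (∑ p ∈ T \ S, I.cost p) = f at *
    generalize I.cmax = M at *
    generalize I.budget = b at *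
    clear_value v
    have b1 : v * (b - M - d) ≤ y :=
      le_trans (mul_le_mul_of_nonneg_left (by linarith) hv0) a2
    have b2 : z ≤ v * (b - d) :=
      le_trans a3 (mul_le_mul_of_nonneg_left (by linarith) hv0)
    rw [div_mul_eq_mul_div, div_le_iff₀ hb]
    have c1 := mul_le_mul_of_nonneg_left b2 hMb
    have c2 := mul_le_mul_of_nonneg_right b1 hb.le
    have c3 := mul_le_mul_of_nonneg_right a1 hM0.le
    linarith
end
end

section
/- Let μ^c be the cost satisfaction function. For all positive integers k1 ≤ k2 there exists a PB instance I with budget b, minimum project cost c_min = b/k2 and maximum project cost c_max = b/k1, such that every feasible outcome of I satisfying EJR1_{μ^c} has utilitarian ratio (w.r.t. μ^c) at most 2/⌊√(b/c_min)⌋ − (c_min + x·c_max)/b, where x = ⌊√k2⌋·(c_min/c_max) − ⌊⌊√k2⌋·(c_min/c_max)⌋. -/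
open Finset
open scoped Classical

noncomputable section

theorem mem_supp_iff {π ν : Type} (I : PB π ν) (p : π) (i : ν) :
    i ∈ I.supp p ↔ i ∈ I.voters ∧ p ∈ I.approves i := by
  unfold PB.supp
  exact Finset.mem_filter

theorem satOf_eq_zero {π ν : Type} (I : PB π ν) (μ : ℝ → ℝ) (i : ν) (S : Finset π)
    (h : ∀ q ∈ S, q ∉ I.approves i) : I.satOf μ i S = 0 := by
  unfold PB.satOf
  apply Finset.sum_eq_zero
  intro q hq
  rw [Finset.mem_inter] at hq
  exact absurd hq.2 (h q hq.1)

theorem satOf_self {π ν : Type} (I : PB π ν) (μ : ℝ → ℝ) (i : ν) (p : π)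
    (h : I.approves i = {p}) : I.satOf μ i {p} = μ (I.cost p) := by
  unfold PB.satOf
  rw [h, Finset.inter_self, Finset.sum_singleton]

/-- The instance: the first `s = ⌊√k2⌋` voters approve `k1` large projects of cost `1/k1`
(with indices `k2, …, k2+k1-1`); each other voter `i` approves only her own small project `i`,
of cost `1/k2`. -/
def tightInst (k1 k2 : ℕ) (hk1 : 0 < k1) (hk12 : k1 ≤ k2) : PB ℕ ℕ where
  projs := Ico (Nat.sqrt k2) (k2 + k1)
  voters := range k2
  approves := fun i => if i < Nat.sqrt k2 then Ico k2 (k2 + k1) else {i}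
  cost := fun p => if p < k2 then 1 / (k2 : ℝ) else 1 / (k1 : ℝ)
  budget := 1
  projs_nonempty := by
    have := Nat.sqrt_le_self k2
    exact ⟨k2, by simp; omega⟩
  budget_pos := one_pos
  cost_pos := by
    intro p _
    have h1 : (0 : ℝ) < k1 := by exact_mod_cast hk1
    have h2 : (0 : ℝ) < k2 := by exact_mod_cast (by omega : 0 < k2)
    split_ifs <;> positivity
  cost_le_budget := by
    intro p _
    have h1 : (1 : ℝ) ≤ k1 := by exact_mod_cast hk1
    have h2 : (1 : ℝ) ≤ k2 := by exact_mod_cast (by omega : 1 ≤ k2)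
    split_ifs
    · rw [div_le_one (by linarith)]; exact h2
    · rw [div_le_one (by linarith)]; exact h1
  approves_subset := by
    intro i hi p hp
    have := Nat.sqrt_le_self k2
    simp only [mem_range] at hi
    split_ifs at hp <;> simp at hp ⊢ <;> omega

/-- Strong form: the instance moreover has positive optimal welfare, so that the utilitarian
ratio is a genuine quotient. -/
theorem ratio_strong (k1 k2 : ℕ) (hk1 : 0 < k1) (hk12 : k1 ≤ k2) :
    ∃ I : PB ℕ ℕ, I.cmin = I.budget / (k2 : ℝ) ∧ I.cmax = I.budget / (k1 : ℝ) ∧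
      0 < I.maxUW (fun t => t) ∧
      ∀ W : Finset ℕ, I.feasibleSet W → I.EJR1 (fun t => t) W →
        I.uw (fun t => t) W ≤
          (2 / ((⌊Real.sqrt (I.budget / I.cmin)⌋ : ℤ) : ℝ) -
            (I.cmin +
              (((⌊Real.sqrt (k2 : ℝ)⌋ : ℤ) : ℝ) * (I.cmin / I.cmax) -
                ((⌊(((⌊Real.sqrt (k2 : ℝ)⌋ : ℤ) : ℝ) * (I.cmin / I.cmax))⌋ : ℤ) : ℝ)) *
                I.cmax) / I.budget) *
          I.maxUW (fun t => t) := by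
  have hk2 : 0 < k2 := by omega
  have r1 : (0 : ℝ) < k1 := by exact_mod_cast hk1
  have r2 : (0 : ℝ) < k2 := by exact_mod_cast hk2
  have r12 : (k1 : ℝ) ≤ k2 := by exact_mod_cast hk12
  have hle : 1 / (k2 : ℝ) ≤ 1 / (k1 : ℝ) := one_div_le_one_div_of_le r1 r12
  have hs0 : 0 < Nat.sqrt k2 := Nat.sqrt_pos.mpr hk2
  have hsk : Nat.sqrt k2 ≤ k2 := Nat.sqrt_le_self k2
  have hss : Nat.sqrt k2 * Nat.sqrt k2 ≤ k2 := Nat.sqrt_le k2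
  have rs0 : (0 : ℝ) < (Nat.sqrt k2 : ℝ) := by exact_mod_cast hs0
  have rsk : (Nat.sqrt k2 : ℝ) ≤ k2 := by exact_mod_cast hsk
  have rss : (Nat.sqrt k2 : ℝ) * (Nat.sqrt k2 : ℝ) ≤ k2 := by exact_mod_cast hss
  have cost_small : ∀ p, p < k2 → (tightInst k1 k2 hk1 hk12).cost p = 1 / (k2 : ℝ) := by
    intro p hp; simp [tightInst, hp]
  have cost_big : ∀ p, k2 ≤ p → (tightInst k1 k2 hk1 hk12).cost p = 1 / (k1 : ℝ) := by
    intro p hp; simp [tightInst, not_lt.mpr hp]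
  have supp_small : ∀ p, Nat.sqrt k2 ≤ p → p < k2 →
      (tightInst k1 k2 hk1 hk12).supp p = {p} := by
    intro p hp hp2
    ext i
    rw [mem_supp_iff, mem_singleton]
    simp only [tightInst, mem_range]
    constructor
    · rintro ⟨hi, h⟩
      split_ifs at h <;> simp at h <;> omega
    · rintro rfl
      simp [not_lt.mpr hp, hp2]
  have supp_big : ∀ p, k2 ≤ p → p < k2 + k1 →
      (tightInst k1 k2 hk1 hk12).supp p = range (Nat.sqrt k2) := by
    intro p hp hp2
    ext i
    rw [mem_supp_iff]
    simp only [tightInst, mem_range]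
    constructor
    · rintro ⟨hi, h⟩
      split_ifs at h with hh
      · exact hh
      · simp at h; omega
    · intro hi
      simp [hi, hp, hp2]; omega
  have hcmin : (tightInst k1 k2 hk1 hk12).cmin = 1 / (k2 : ℝ) := by
    apply le_antisymm
    · by_cases h : Nat.sqrt k2 < k2
      · rw [← cost_small _ h]
        exact Finset.inf'_le _ (by simp [tightInst]; omega)
      · have h3 : k2 ≤ 1 := by
          have : Nat.sqrt k2 = k2 := by omega
          rw [this] at hss
          by_contra hc
          nlinarith
        have h4 : k1 = k2 := by omega
        have : (1 : ℝ) / k2 = (tightInst k1 k2 hk1 hk12).cost k2 := by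
          rw [cost_big _ le_rfl, h4]
        rw [this]
        exact Finset.inf'_le _ (by simp [tightInst]; omega)
    · apply Finset.le_inf'
      intro p _
      by_cases h : p < k2
      · rw [cost_small _ h]
      · rw [cost_big _ (by omega)]; exact hle
  have hcmax : (tightInst k1 k2 hk1 hk12).cmax = 1 / (k1 : ℝ) := by
    apply le_antisymm
    · apply Finset.sup'_le
      intro p _
      by_cases h : p < k2
      · rw [cost_small _ h]; exact hle
      · rw [cost_big _ (by omega)]
    · rw [← cost_big k2 le_rfl]
      exact Finset.le_sup' _ (by simp [tightInst]; omega)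
  have hbud : (tightInst k1 k2 hk1 hk12).budget = 1 := rfl
  have hmax : (Nat.sqrt k2 : ℝ) ≤ (tightInst k1 k2 hk1 hk12).maxUW (fun t => t) := by
    have h1 : (tightInst k1 k2 hk1 hk12).uw (fun t => t) (Ico k2 (k2 + k1))
        = (Nat.sqrt k2 : ℝ) := by
      unfold PB.uw
      rw [Finset.sum_congr rfl (g := fun _ => (Nat.sqrt k2 : ℝ) * (1 / (k1 : ℝ)))]
      · simp; field_simp
      · intro p hp
        simp only [mem_Ico] at hp
        rw [supp_big p hp.1 hp.2, cost_big p hp.1, card_range]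
    rw [← h1]
    unfold PB.maxUW
    apply Finset.le_sup'
    rw [mem_filter, mem_powerset]
    constructor
    · intro p hp
      simp [tightInst] at hp ⊢
      omega
    · unfold PB.costOf
      rw [Finset.sum_congr rfl (g := fun _ => (1 / (k1 : ℝ)))]
      · rw [hbud]; simp; field_simp; exact le_rfl
      · intro p hp
        simp only [mem_Ico] at hp
        exact cost_big p hp.1
  refine ⟨tightInst k1 k2 hk1 hk12, by rw [hcmin, hbud], by rw [hcmax, hbud],
    lt_of_lt_of_le rs0 hmax, ?_⟩
  intro W hW hE
  have hsub : Ico (Nat.sqrt k2) k2 ⊆ W := by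
    intro i hi
    simp only [mem_Ico] at hi
    have happ : (tightInst k1 k2 hk1 hk12).approves i = {i} := by
      simp [tightInst, not_lt.mpr hi.1]
    have hc : (tightInst k1 k2 hk1 hk12).cohesive {i} {i} := by
      refine ⟨?_, ?_, ?_, ?_⟩
      · simp [tightInst, hi.2]
      · simp [tightInst]; omega
      · intro j hj
        rw [mem_singleton] at hj
        rw [hj, happ]
      · rw [hbud]
        simp only [PB.costOf, sum_singleton, cost_small i hi.2]
        simp [tightInst]
    rcases hE {i} {i} hc with h | ⟨j, hj, p, hp, hpW, hgt⟩
    · exact h (mem_singleton_self i)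
    · exfalso
      rw [mem_singleton] at hj
      subst hj
      rw [happ, mem_singleton] at hp
      subst hp
      rw [satOf_eq_zero, satOf_self _ _ _ _ happ, zero_add] at hgt
      · exact lt_irrefl _ hgt
      · intro q hq hqp
        rw [happ, mem_singleton] at hqp
        exact hpW (hqp ▸ hq)
  obtain ⟨hWP, hWc⟩ := hW
  have hWP' : W ⊆ Ico (Nat.sqrt k2) (k2 + k1) := hWP
  set B := W.filter (fun p => ¬ p < k2) with hB
  have hsm : W.filter (fun p => p < k2) = Ico (Nat.sqrt k2) k2 := by
    ext p
    simp only [mem_filter, mem_Ico]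
    constructor
    · rintro ⟨h, h'⟩
      exact ⟨(mem_Ico.mp (hWP' h)).1, h'⟩
    · rintro ⟨h, h'⟩
      exact ⟨hsub (mem_Ico.mpr ⟨h, h'⟩), h'⟩
  have hcost : (tightInst k1 k2 hk1 hk12).costOf W =
      ((k2 : ℝ) - (Nat.sqrt k2 : ℝ)) * (1 / (k2 : ℝ)) + (B.card : ℝ) * (1 / (k1 : ℝ)) := by
    unfold PB.costOf
    rw [← Finset.sum_filter_add_sum_filter_not W (fun p => p < k2), hsm, ← hB]
    congr 1
    · rw [Finset.sum_congr rfl (g := fun _ => (1 / (k2 : ℝ)))]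
      · rw [sum_const, Nat.card_Ico, nsmul_eq_mul, Nat.cast_sub hsk]
      · intro p hp
        exact cost_small p (mem_Ico.mp hp).2
    · rw [Finset.sum_congr rfl (g := fun _ => (1 / (k1 : ℝ)))]
      · rw [sum_const, nsmul_eq_mul]
      · intro p hp
        exact cost_big p (not_lt.mp (mem_filter.mp hp).2)
  have huw : (tightInst k1 k2 hk1 hk12).uw (fun t => t) W =
      ((k2 : ℝ) - (Nat.sqrt k2 : ℝ)) * (1 / (k2 : ℝ)) +
        (B.card : ℝ) * ((Nat.sqrt k2 : ℝ) * (1 / (k1 : ℝ))) := by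
    unfold PB.uw
    rw [← Finset.sum_filter_add_sum_filter_not W (fun p => p < k2), hsm, ← hB]
    congr 1
    · rw [Finset.sum_congr rfl (g := fun _ => (1 / (k2 : ℝ)))]
      · rw [sum_const, Nat.card_Ico, nsmul_eq_mul, Nat.cast_sub hsk]
      · intro p hp
        have hp := mem_Ico.mp hp
        rw [cost_small p hp.2, supp_small p hp.1 hp.2]
        simp
    · rw [Finset.sum_congr rfl (g := fun _ => (Nat.sqrt k2 : ℝ) * (1 / (k1 : ℝ)))]
      · rw [sum_const, nsmul_eq_mul]
      · intro p hp
        have hp := mem_filter.mp hp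
        rw [cost_big p (not_lt.mp hp.2),
          supp_big p (not_lt.mp hp.2) (mem_Ico.mp (hWP' hp.1)).2, card_range]
  rw [hcost, hbud] at hWc
  have e1 : (1 : ℝ) / (1 / (k2 : ℝ)) = k2 := by field_simp
  have e2 : (1 / (k2 : ℝ)) / (1 / (k1 : ℝ)) = (k1 : ℝ) / k2 := by field_simp
  rw [hcmin, hcmax, hbud, e1, e2, Real.floor_real_sqrt_eq_nat_sqrt, huw]
  simp only [Int.cast_natCast]
  generalize (Nat.sqrt k2 : ℝ) = s at *
  generalize (tightInst k1 k2 hk1 hk12).maxUW (fun t => t) = M at *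
  have hm : ((B.card : ℤ) : ℝ) ≤ s * ((k1 : ℝ) / k2) := by
    have h5 : (B.card : ℝ) * (1 / (k1 : ℝ)) ≤ s * (1 / k2) := by
      have : (k2 : ℝ) * (1 / k2) = 1 := by field_simp
      linarith
    have h6 := mul_le_mul_of_nonneg_right h5 r1.le
    have h7 : (B.card : ℝ) * (1 / (k1 : ℝ)) * k1 = B.card := by field_simp
    have h8 : s * (1 / k2) * k1 = s * ((k1 : ℝ) / k2) := by field_simp
    push_cast
    linarith
  have hfl : (B.card : ℝ) ≤ ((⌊s * ((k1 : ℝ) / k2)⌋ : ℤ) : ℝ) := by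
    exact_mod_cast Int.le_floor.mpr hm
  generalize ((⌊s * ((k1 : ℝ) / k2)⌋ : ℤ) : ℝ) = F at *
  have hm0 : (0 : ℝ) ≤ B.card := Nat.cast_nonneg _
  generalize (B.card : ℝ) = m at *
  have hfac : 2 / s - (1 / (k2 : ℝ) + (s * ((k1 : ℝ) / k2) - F) * (1 / k1)) / 1
      = (1 / s - 1 / k2 + F / k1) + (1 / s - s / k2) := by
    field_simp; ring
  have hsk' : s / k2 ≤ 1 / s := by
    rw [div_le_div_iff₀ r2 rs0]; linarith
  have hrsk : 1 / (k2 : ℝ) ≤ 1 / s := by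
    apply one_div_le_one_div_of_le rs0
    exact rsk
  have hF0 : 0 ≤ F / k1 := div_nonneg (by linarith) r1.le
  rw [hfac]
  calc ((k2 : ℝ) - s) * (1 / k2) + m * (s * (1 / k1))
      ≤ (k2 - s) * (1 / k2) + F * (s * (1 / k1)) := by gcongr
    _ = (1 / s - 1 / k2 + F / k1) * s := by field_simp
    _ ≤ ((1 / s - 1 / k2 + F / k1) + (1 / s - s / k2)) * s := by
        exact mul_le_mul_of_nonneg_right (by linarith) rs0.le
    _ ≤ _ := mul_le_mul_of_nonneg_left hmax (by linarith)

/-- Tightness of the MES guarantee for EJR1 rules under cost satisfaction. -/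
theorem prop_ratio_upper_bound (k1 k2 : ℕ) (hk1 : 0 < k1) (hk12 : k1 ≤ k2) :
    ∃ I : PB ℕ ℕ, I.cmin = I.budget / (k2 : ℝ) ∧ I.cmax = I.budget / (k1 : ℝ) ∧
      ∀ W : Finset ℕ, I.feasibleSet W → I.EJR1 (fun t => t) W →
        I.uw (fun t => t) W ≤
          (2 / ((⌊Real.sqrt (I.budget / I.cmin)⌋ : ℤ) : ℝ) -
            (I.cmin +
              (((⌊Real.sqrt (k2 : ℝ)⌋ : ℤ) : ℝ) * (I.cmin / I.cmax) -
                ((⌊(((⌊Real.sqrt (k2 : ℝ)⌋ : ℤ) : ℝ) * (I.cmin / I.cmax))⌋ : ℤ) : ℝ)) *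
                I.cmax) / I.budget) *
          I.maxUW (fun t => t) := by
  obtain ⟨I, h1, h2, _, h3⟩ := ratio_strong k1 k2 hk1 hk12
  exact ⟨I, h1, h2, h3⟩
end
end
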